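/- arXiv:math/9505203 — 7 statements merged into one kernel-verified Lean document; each statement's English description precedes it below -/
import Mathlib

section
/- Assume CH holds (2^ω = ω₁) and f is a Δ-function on ω₂. Let {c_α : α < ω₂} be pairwise disjoint finite subsets of ω₂ and let B be a countable subset of ω₂. Then for each natural number n there exist distinct ordinals α₀, α₁, …, α_{n-1} < ω₂ such that B ⊆ f{ξ,η} for every ξ ∈ c_{α_i} and η ∈ c_{α_j} with i < j < n. -/
noncomputable section

/-- The second uncountable cardinal ω₂, as an ordinal. -/
def omega2 : Ordinal := (Cardinal.aleph 2).ord

/-- Two finite subsets `x` and `y` of ω₂ are good for `f`. -/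
def GoodFor (f : Ordinal → Ordinal → Set Ordinal) (x y : Finset Ordinal) : Prop :=
  ∀ α ∈ x ∩ y, ∀ β ∈ x \ y, ∀ γ ∈ y \ x,
    ((α < β ∧ α < γ) → α ∈ f β γ) ∧
    (α < β → f α γ ⊆ f β γ) ∧
    (α < γ → f α β ⊆ f γ β)

/-- `f` is a Δ-function: every uncountable family of finite subsets of ω₂
contains two sets which are good for `f`. -/
def IsDeltaFunction (f : Ordinal → Ordinal → Set Ordinal) : Prop :=
  ∀ F : Set (Finset Ordinal), (∀ x ∈ F, ∀ ξ ∈ x, ξ < omega2) → ¬ F.Countable →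
    ∃ x ∈ F, ∃ y ∈ F, x ≠ y ∧ GoodFor f x y

/-!
Only `ℵ₁` many of the disjoint sets `c α` can meet the ordinals up to `sSup B`, so more than `𝔠`
of them lie above `B`. Colour a pair of these by some `b ∈ B` that a value of `f` between them
omits, or by a default colour if nothing is omitted. By the Erdős–Rado theorem `𝔠⁺ → (ℵ₁)²_ω`
there is an uncountable homogeneous set `H`. Its colour is not an element `b`: the sets
`insert b (c α)` for `α ∈ H` form an uncountable family, and in a good pair of them the common
element `b` lies below all the others, hence by goodness in the values of `f` between the two.
-/

open Cardinal Function Order Set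

universe u v w

section ErdosRado

theorem exists_superset_closed_mk_le {S Ω K : Type u} {θ : Cardinal.{u}} (hθ : ℵ₀ ≤ θ)
    (hK : θ ^ #K ≤ θ) (hΩ : #Ω ≤ θ) {A : Set S} (hA : #A ≤ θ) (F : Ω → (K → S) → S) :
    ∃ M ⊇ A, #M ≤ θ ∧ ∀ ω s, (∀ k, s k ∈ M) → F ω s ∈ M := by
  let arity : A ⊕ Ω → Type u := Sum.elim (fun _ => PEmpty) fun _ => K
  let value : WType arity → S := WType.elim S fun
    | ⟨Sum.inl a, _⟩ => a
    | ⟨Sum.inr ω, s⟩ => F ω s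
  have hterm (a : A ⊕ Ω) : θ ^ #(arity a) ≤ θ := by
    rcases a with _ | _
    · simpa [arity] using one_le_aleph0.trans hθ
    · exact hK
  have hterms : #(WType arity) ≤ θ := WType.cardinalMk_le_of_le <| calc
    Cardinal.sum (fun a => θ ^ #(arity a)) ≤ #(A ⊕ Ω) * θ := by
      simpa only [sum_const'] using sum_le_sum _ _ hterm
    _ ≤ (θ + θ) * θ := by
      rw [mk_sum, lift_id, lift_id]
      gcongr
    _ = θ := by rw [add_eq_self hθ, mul_eq_self hθ]
  refine ⟨range value, ?_, mk_range_le.trans hterms, ?_⟩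
  · exact fun a ha => ⟨WType.mk (Sum.inl ⟨a, ha⟩) PEmpty.elim, rfl⟩
  · intro ω s hs
    choose t ht using hs
    exact ⟨WType.mk (Sum.inr ω) t, congrArg (F ω) (funext ht)⟩

theorem exists_range_eq_of_mk_le {S K : Type u} {A : Set S} (hA : A.Nonempty) (hK : #A ≤ #K) :
    ∃ s : K → S, range s = A := by
  obtain ⟨e⟩ := hK
  have := hA.to_subtype
  refine ⟨Subtype.val ∘ invFun e, ?_⟩
  rw [(invFun_surjective e.injective).range_comp, Subtype.range_coe]

theorem exists_mk_le_two_power_forall_exists_eq {S C : Type u} {κ : Cardinal.{u}} (hκ : ℵ₀ ≤ κ)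
    (hC : #C ≤ 2 ^ κ) (g : S → S → C) :
    ∃ M : Set S, #M ≤ 2 ^ κ ∧
      ∀ x ∉ M, ∀ A : Set M, #A ≤ κ → ∃ y ∉ A, ∀ a ∈ A, g a y = g a x := by
  rcases isEmpty_or_nonempty S with hS | hS
  · exact ⟨∅, by simp, fun x => hS.elim x⟩
  let x₀ := Classical.arbitrary S
  obtain ⟨K, rfl⟩ : ∃ K, #K = κ := ⟨κ.out, mk_out κ⟩
  have hpow : ((2 : Cardinal) ^ #K) ^ #K = 2 ^ #K := by rw [← power_mul, mul_eq_self hκ]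
  have hinf : ℵ₀ ≤ (2 : Cardinal) ^ #K := hκ.trans (cantor _).le
  have hlabels : #(K → C) ≤ 2 ^ #K := by
    rw [← power_def, ← hpow]
    exact power_le_power_right hC
  let Realizes (h : K → C) (s : K → S) (y : S) : Prop := y ∉ range s ∧ ∀ k, g (s k) y = h k
  -- There are only `2 ^ κ` patterns over a set of size `2 ^ κ`, so one realization of each
  -- realizable pattern can be put into `M`.
  obtain ⟨M, hx₀M, hM, hclosed⟩ := exists_superset_closed_mk_le hinf hpow.le hlabels
    (A := {x₀}) (by simpa using one_le_aleph0.trans hinf)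
    fun h s => Classical.epsilon (Realizes h s)
  refine ⟨M, hM, fun x hx A hA => ?_⟩
  rcases A.eq_empty_or_nonempty with rfl | hne
  · exact ⟨⟨x₀, hx₀M rfl⟩, by simp, by simp⟩
  obtain ⟨s, rfl⟩ := exists_range_eq_of_mk_le hne hA
  have hxs : Realizes (fun k => g (s k) x) (fun k => s k) x :=
    ⟨by rintro ⟨k, rfl⟩; exact hx (s k).2, fun _ => rfl⟩
  obtain ⟨hnotMem, heq⟩ := Classical.epsilon_spec ⟨x, hxs⟩
  refine ⟨⟨_, hclosed (fun k => g (s k) x) (fun k => s k) fun k => (s k).2⟩, ?_, ?_⟩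
  · rintro ⟨k, hk⟩
    exact hnotMem ⟨k, congrArg Subtype.val hk⟩
  · rintro _ ⟨k, rfl⟩
    exact heq k

theorem exists_forall_image_Iio {I M : Type u} [LinearOrder I] [WellFoundedLT I]
    {κ : Cardinal.{u}} (hI : ∀ i : I, #(Iio i) ≤ κ) {P : Set M → M → Prop}
    (hP : ∀ A : Set M, #A ≤ κ → ∃ y, P A y) : ∃ a : I → M, ∀ i, P (a '' Iio i) (a i) := by
  have : Nonempty M := (hP ∅ (by simp)).nonempty
  choose! next hnext using hP
  let a : I → M := wellFounded_lt.fix fun i prev => next (range fun j : Iio i => prev j j.2)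
  have ha (i : I) : a i = next (a '' Iio i) := by
    rw [image_eq_range]
    exact wellFounded_lt.fix_eq _ i
  refine ⟨a, fun i => ?_⟩
  rw [ha]
  exact hnext _ (mk_image_le.trans (hI i))

theorem exists_injective_endHomogeneous {S C : Type u} {κ : Cardinal.{u}} (hκ : ℵ₀ ≤ κ)
    (hS : 2 ^ κ < #S) (hC : #C ≤ 2 ^ κ) (g : S → S → C) :
    ∃ (a : (succ κ).ord.ToType → S) (x : S), Injective a ∧
      ∀ i j, i < j → g (a i) (a j) = g (a i) x := by
  obtain ⟨M, hM, hreal⟩ := exists_mk_le_two_power_forall_exists_eq hκ hC g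
  obtain ⟨x, hx⟩ : ∃ x, x ∉ M := by
    by_contra! h
    rw [eq_univ_of_forall h, mk_univ] at hM
    exact hM.not_gt hS
  have hinitial (i : (succ κ).ord.ToType) : #(Iio i) ≤ κ := by
    simpa using mk_Iio_lt i (by simp)
  obtain ⟨a, ha⟩ := exists_forall_image_Iio hinitial (hreal x hx)
  have hinj : Injective a := .of_lt_imp_ne fun i j hij h => (ha j).1 ⟨i, hij, h⟩
  exact ⟨fun i => a i, x, Subtype.val_injective.comp hinj,
    fun i j hij => (ha j).2 _ (mem_image_of_mem a hij)⟩

-- The Erdős–Rado theorem `(2 ^ κ)⁺ → (κ⁺)²_κ`.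
theorem exists_homogeneous_of_two_power_lt {S C : Type u} {κ : Cardinal.{u}} (hκ : ℵ₀ ≤ κ)
    (hS : 2 ^ κ < #S) (hC : #C ≤ κ) (g : Sym2 S → C) :
    ∃ H : Set S, κ < #H ∧ ∃ k, H.Pairwise fun x y => g s(x, y) = k := by
  obtain ⟨a, x, hinj, ha⟩ := exists_injective_endHomogeneous hκ hS (hC.trans (cantor κ).le)
    fun y z => g s(y, z)
  have hcof : #C < (succ κ).ord.cof := by
    rw [(isRegular_succ hκ).cof_ord]
    exact lt_succ_of_le hC
  obtain ⟨k, hk⟩ := infinite_pigeonhole_card (fun i => g s(a i, x)) (succ κ) (by simp)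
    (hκ.trans (le_succ κ)) hcof
  refine ⟨a '' {i | g s(a i, x) = k}, ?_, k, ?_⟩
  · rw [mk_image_eq hinj]
    exact succ_le_iff.1 hk
  · rintro _ ⟨i, hi, rfl⟩ _ ⟨j, hj, rfl⟩ hne
    rcases lt_or_gt_of_ne (ne_of_apply_ne a hne) with h | h
    · exact (ha i j h).trans hi
    · rw [Sym2.eq_swap]
      exact (ha j i h).trans hj

theorem exists_uncountable_homogeneous {S : Type u} {C : Type v} [Countable C] (hS : 𝔠 < #S)
    (g : Sym2 S → C) :
    ∃ H : Set S, ¬ H.Countable ∧ ∃ k, H.Pairwise fun x y => g s(x, y) = k := by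
  have : Countable (Shrink.{u, v} C) := (equivShrink.{u, v} C).symm.injective.countable
  obtain ⟨H, hH, k, hk⟩ := exists_homogeneous_of_two_power_lt le_rfl
    (by rwa [two_power_aleph0]) mk_le_aleph0 fun p => equivShrink.{u, v} C (g p)
  refine ⟨H, ?_, (equivShrink.{u, v} C).symm k, fun x hx y hy hne => ?_⟩
  · rwa [← le_aleph0_iff_set_countable, not_le]
  · exact (Equiv.eq_symm_apply _).2 (hk hx hy hne)

theorem exists_uncountable_forall_isIndepSet {S : Type u} {C : Type v} [Countable C]
    (hS : 𝔠 < #S) {G : C → SimpleGraph S}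
    (hG : ∀ k (H : Set S), (G k).IsClique H → H.Countable) :
    ∃ H : Set S, ¬ H.Countable ∧ ∀ k, (G k).IsIndepSet H := by
  have hcolor (p : Sym2 S) : ∃ o : Option C,
      o.elim (∀ k, p ∉ (G k).edgeSet) fun k => p ∈ (G k).edgeSet := by
    by_cases h : ∃ k, p ∈ (G k).edgeSet
    · exact h.imp' some fun _ => id
    · exact ⟨none, not_exists.1 h⟩
  choose color hcolor using hcolor
  obtain ⟨H, hH, o, ho⟩ := exists_uncountable_homogeneous hS color
  have hpair : H.Pairwise fun x y =>
      o.elim (∀ k, ¬ (G k).Adj x y) fun k => (G k).Adj x y :=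
    fun x hx y hy hne => ho hx hy hne ▸ hcolor s(x, y)
  cases o with
  | none => exact ⟨H, hH, fun k x hx y hy hne => hpair hx hy hne k⟩
  | some k => exact absurd (hG k H hpair) hH

end ErdosRado

section Omega2

theorem lift_mk_setOf_not_disjoint_le {ι : Type u} {α : Type v} {c : ι → Set α}
    (hc : Pairwise (Disjoint on c)) (U : Set α) :
    lift.{v} #{i | ¬ Disjoint (c i) U} ≤ lift.{u} #U := by
  choose t htc htU using fun i : {i | ¬ Disjoint (c i) U} => not_disjoint_iff.1 i.2
  refine lift_mk_le_lift_mk_of_injective (f := fun i => (⟨t i, htU i⟩ : U)) fun i j hij => ?_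
  have htij : t i = t j := congrArg Subtype.val hij
  by_contra hne
  exact (hc (Subtype.coe_ne_coe.2 hne)).ne_of_mem (htc i) (htc j) htij

theorem mk_Iic_le_aleph_one_of_lt_omega2 {δ : Ordinal.{u}} (hδ : δ < omega2) :
    #(Iic δ) ≤ ℵ₁ := by
  have hsucc : (succ δ).card < ℵ_ 2 :=
    lt_ord.1 ((isSuccLimit_ord (aleph0_le_aleph 2)).succ_lt hδ)
  rw [← one_add_one_eq_two, ← succ_aleph, lt_succ_iff] at hsucc
  rw [← Iio_succ, mk_Iio_ordinal]
  simpa using lift_le.{u + 1}.2 hsucc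

theorem sSup_lt_omega2 {B : Set Ordinal.{u}} (hB : B.Countable) (hBsub : ∀ ξ ∈ B, ξ < omega2) :
    sSup B < omega2 := by
  refine Ordinal.sSup_lt_of_lt_cof ?_ hBsub
  rw [omega2, ord_aleph, ← one_add_one_eq_two, Ordinal.lift_omega]
  simp only [Ordinal.lift_add, Ordinal.lift_one, cof_omega_add_one]
  exact (le_aleph0_iff_set_countable.2 hB).trans_lt (by simp)

theorem continuum_lt_mk_Iio_omega2 (hCH : continuum.{w} = ℵ₁) :
    continuum.{u + 1} < #(Iio omega2.{u}) := by
  have hCH₀ : continuum.{0} = ℵ₁ := lift_injective.{w} (by simpa using hCH)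
  rw [← lift_continuum.{u + 1, 0}, hCH₀, mk_Iio_ordinal, omega2, card_ord, lift_aleph]
  simp

theorem continuum_lt_mk_setOf_forall_lt {ι : Type v} (hι : 𝔠 < #ι) {c : ι → Finset Ordinal.{u}}
    (hc_disj : Pairwise (Disjoint on c)) {δ : Ordinal.{u}} (hδ : δ < omega2) :
    𝔠 < #{i | ∀ ξ ∈ c i, δ < ξ} := by
  let meetsIic : Set ι := {i | ¬ Disjoint (c i : Set Ordinal.{u}) (Iic δ)}
  have hmeets : #meetsIic ≤ 𝔠 := by
    have h := (lift_mk_setOf_not_disjoint_le (c := fun i => (c i : Set Ordinal.{u}))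
      (fun i j hij => Finset.disjoint_coe.2 (hc_disj hij)) (Iic δ)).trans
      (lift_le.2 ((mk_Iic_le_aleph_one_of_lt_omega2 hδ).trans aleph_one_le_continuum))
    simpa using h
  have hcompl : {i | ∀ ξ ∈ c i, δ < ξ} = meetsIicᶜ := by
    ext i
    simp [meetsIic, Set.disjoint_left]
  have : Infinite ι := aleph0_le_mk_iff.1 (aleph0_le_continuum.trans hι.le)
  rwa [hcompl, mk_compl_of_infinite _ (hmeets.trans_lt hι)]

end Omega2

section DeltaFunction

variable {f : Ordinal.{u} → Ordinal.{u} → Set Ordinal.{u}}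

theorem GoodFor.mem_of_insert {x y : Finset Ordinal.{u}} {b : Ordinal.{u}}
    (hgood : GoodFor f (insert b x) (insert b y)) (hxy : Disjoint x y) {ξ η : Ordinal.{u}}
    (hξ : ξ ∈ x) (hη : η ∈ y) (hbξ : b < ξ) (hbη : b < η) : b ∈ f ξ η := by
  have hξy : ξ ∉ y := Finset.disjoint_left.1 hxy hξ
  have hηx : η ∉ x := Finset.disjoint_right.1 hxy hη
  refine (hgood b (by simp) ξ ?_ η ?_).1 ⟨hbξ, hbη⟩
  · simp [hξ, hbξ.ne', hξy]
  · simp [hη, hbη.ne', hηx]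

variable {ι : Type v} {c : ι → Finset Ordinal.{u}} {B : Set Ordinal.{u}} {b : Ordinal.{u}}

/-- The graph on the indices of a family `c` that joins `i` to `j` when `b` is missing from
`f ξ η` for some `ξ ∈ c i` and `η ∈ c j`. It turns the conclusion `B ⊆ f ξ η` into independence
in the omission graphs of all `b ∈ B`. -/
def omissionGraph (hsymm : ∀ α β, f α β = f β α) (c : ι → Finset Ordinal.{u})
    (b : Ordinal.{u}) : SimpleGraph ι where
  Adj i j := i ≠ j ∧ ∃ ξ ∈ c i, ∃ η ∈ c j, b ∉ f ξ η
  symm := ⟨fun _ _ ⟨hij, ξ, hξ, η, hη, hb⟩ => ⟨hij.symm, η, hη, ξ, hξ, hsymm ξ η ▸ hb⟩⟩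

theorem IsDeltaFunction.countable_of_isClique_omissionGraph (hΔ : IsDeltaFunction f)
    (hsymm : ∀ α β, f α β = f β α) (hc_sub : ∀ i, ∀ ξ ∈ c i, ξ < omega2)
    (hc_disj : Pairwise (Disjoint on c)) (hb : b < omega2) (habove : ∀ i, ∀ ξ ∈ c i, b < ξ)
    {H : Set ι} (hH : (omissionGraph hsymm c b).IsClique H) : H.Countable := by
  by_contra huncountable
  have hinj : InjOn (fun i => insert b (c i)) H := by
    intro i hi j hj hij
    by_contra hne
    obtain ⟨-, ξ, hξ, -⟩ := hH hi hj hne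
    have hξj : ξ ∈ insert b (c j) := (Finset.ext_iff.1 hij ξ).1 (Finset.mem_insert_of_mem hξ)
    exact Finset.disjoint_left.1 (hc_disj hne) hξ
      (Finset.mem_of_mem_insert_of_ne hξj (habove i ξ hξ).ne')
  have hinsert_sub : ∀ x ∈ (fun i => insert b (c i)) '' H, ∀ ξ ∈ x, ξ < omega2 := by
    rintro _ ⟨i, -, rfl⟩
    exact (Finset.forall_mem_insert _ _ _).2 ⟨hb, hc_sub i⟩
  obtain ⟨_, ⟨i, hi, rfl⟩, _, ⟨j, hj, rfl⟩, hne, hgood⟩ := hΔ _ hinsert_sub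
    fun h => huncountable (countable_of_injective_of_countable_image hinj h)
  have hij : i ≠ j := ne_of_apply_ne (fun i => insert b (c i)) hne
  obtain ⟨-, ξ, hξ, η, hη, hbf⟩ := hH hi hj hij
  exact hbf (hgood.mem_of_insert (hc_disj hij) hξ hη (habove i ξ hξ) (habove j η hη))

theorem IsDeltaFunction.exists_uncountable_pairwise_subset_of_forall_lt (hΔ : IsDeltaFunction f)
    (hsymm : ∀ α β, f α β = f β α) (hι : 𝔠 < #ι) (hc_sub : ∀ i, ∀ ξ ∈ c i, ξ < omega2)
    (hc_disj : Pairwise (Disjoint on c)) (hB : B.Countable) (hBsub : ∀ b ∈ B, b < omega2)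
    (habove : ∀ b ∈ B, ∀ i, ∀ ξ ∈ c i, b < ξ) :
    ∃ H : Set ι, ¬ H.Countable ∧ H.Pairwise fun i j => ∀ ξ ∈ c i, ∀ η ∈ c j, B ⊆ f ξ η := by
  have := hB.to_subtype
  have hcliques (b : B) (H : Set ι) (hH : (omissionGraph hsymm c b).IsClique H) : H.Countable :=
    hΔ.countable_of_isClique_omissionGraph hsymm hc_sub hc_disj (hBsub b b.2) (habove b b.2) hH
  obtain ⟨H, hH, hindep⟩ := exists_uncountable_forall_isIndepSet hι hcliques
  refine ⟨H, hH, fun i hi j hj hij ξ hξ η hη b hb => ?_⟩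
  by_contra hbf
  exact hindep ⟨b, hb⟩ hi hj hij ⟨hij, ξ, hξ, η, hη, hbf⟩

theorem stmt0_general (hsymm : ∀ α β, f α β = f β α) (hΔ : IsDeltaFunction f) (hι : 𝔠 < #ι)
    (hc_sub : ∀ i, ∀ ξ ∈ c i, ξ < omega2) (hc_disj : Pairwise (Disjoint on c))
    (hB : B.Countable) (hBsub : ∀ ξ ∈ B, ξ < omega2) :
    ∃ H : Set ι, ¬ H.Countable ∧ H.Pairwise fun i j => ∀ ξ ∈ c i, ∀ η ∈ c j, B ⊆ f ξ η := by
  let T : Set ι := {i | ∀ ξ ∈ c i, sSup B < ξ}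
  have hT : 𝔠 < #T := continuum_lt_mk_setOf_forall_lt hι hc_disj (sSup_lt_omega2 hB hBsub)
  have hBdd : BddAbove B := ⟨omega2, fun b hb => (hBsub b hb).le⟩
  obtain ⟨H, hH, hpair⟩ := hΔ.exists_uncountable_pairwise_subset_of_forall_lt hsymm hT
    (fun i => hc_sub i) (hc_disj.comp_of_injective Subtype.val_injective) hB hBsub
    fun b hb i ξ hξ => (le_csSup hBdd hb).trans_lt (i.2 ξ hξ)
  refine ⟨Subtype.val '' H, fun h => hH ?_, Subtype.val_injective.injOn.pairwise_image.2 hpair⟩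
  exact countable_of_injective_of_countable_image Subtype.val_injective.injOn h

end DeltaFunction

theorem stmt0
    (f : Ordinal → Ordinal → Set Ordinal)
    (hsymm : ∀ α β, f α β = f β α)
    (hlt : ∀ α β γ, γ ∈ f α β → γ < α ∧ γ < β)
    (hcount : ∀ α β, (f α β).Countable)
    (hCH : Cardinal.continuum = Cardinal.aleph 1)
    (hΔ : IsDeltaFunction f)
    (c : Ordinal → Finset Ordinal)
    (hc_sub : ∀ α < omega2, ∀ ξ ∈ c α, ξ < omega2)
    (hc_disj : ∀ α < omega2, ∀ β < omega2, α ≠ β → Disjoint (c α) (c β))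
    (B : Set Ordinal) (hB : B.Countable) (hBsub : ∀ ξ ∈ B, ξ < omega2)
    (n : ℕ) :
    ∃ a : Fin n → Ordinal, Function.Injective a ∧ (∀ i, a i < omega2) ∧
      ∀ i j : Fin n, i < j → ∀ ξ ∈ c (a i), ∀ η ∈ c (a j), B ⊆ f ξ η := by
  obtain ⟨H, hH, hpair⟩ := stmt0_general hsymm hΔ (continuum_lt_mk_Iio_omega2 hCH)
    (c := fun α : Iio omega2 => c α) (fun α => hc_sub α α.2)
    (fun α β hne => hc_disj α α.2 β β.2 (Subtype.coe_ne_coe.2 hne)) hB hBsub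
  have hinf : H.Infinite := fun h => hH h.countable
  let a : Fin n ↪ H := Fin.valEmbedding.trans (hinf.natEmbedding H)
  exact ⟨fun i => (a i).1, Subtype.val_injective.comp (Subtype.val_injective.comp a.injective),
    fun i => (a i).1.2, fun i j hij =>
      hpair (a i).2 (a j).2 (Subtype.coe_ne_coe.2 (a.injective.ne hij.ne))⟩
end
end

section
/- Let H = {H(α) : α < ω₂} be a family of subsets of ω₂ such that for each α, α ∈ H(α) and H(α) ⊆ α + 1 (i.e. max H(α) = α), and let τ_H be the topology on ω₂ generated by H ∪ {ω₂ \ H(α) : α < ω₂} as a subbase. Assume there is a function i : [ω₂]² → [ω₂]^{<ω} with i{α,β} ⊆ α ∩ β for each pair, such that for all β < α < ω₂: if β ∈ H(α) then H(β) \ H(α) ⊆ ⋃{H(γ) : γ ∈ i{α,β}}, and if β ∉ H(α) then H(β) ∩ H(α) ⊆ ⋃{H(γ) : γ ∈ i{α,β}}. Then every H(α) is a compact subset of (ω₂, τ_H); consequently (ω₂, τ_H) is locally compact. -/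
noncomputable section

/-- The underlying set of our spaces: the ordinals below ω₂. -/
abbrev Om2 := {o : Ordinal // o < (Cardinal.aleph 2).ord}

/-!
Let `U` be an ultrafilter containing some `H α`, and let `β` be minimal with `H β ∈ U`. A finite
union of sets `H γ` with `γ < β` is not in `U`, so modulo `U` the covering hypotheses say
`H β ⊆ H α` when `β ∈ H α`, and `H β ∩ H α = ∅` when `β ∉ H α`. Hence `U` contains exactly those
`H α` that contain `β`, which means that `U` converges to `β`.
-/

open Set Filter Topology

section ClopenSubbase

variable {ι X : Type*} [τ : TopologicalSpace X] {H : ι → Set X}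

theorem isClopen_of_eq_generateFrom
    (hτ : τ = .generateFrom (range H ∪ compl '' range H)) (j : ι) : IsClopen (H j) := by
  have hopen {s : Set X} (hs : s ∈ range H ∪ compl '' range H) : IsOpen s :=
    hτ ▸ TopologicalSpace.isOpen_generateFrom_of_mem hs
  exact ⟨⟨hopen (.inr (mem_image_of_mem _ ⟨j, rfl⟩))⟩, hopen (.inl ⟨j, rfl⟩)⟩

theorem regularSpace_of_eq_generateFrom_isClopen
    {S : Set (Set X)} (hτ : τ = .generateFrom S) (hS : ∀ s ∈ S, IsClopen s) : RegularSpace X :=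
  (regularSpace_generateFrom hτ).2 fun s hs _ hx ↦ by
    rw [(hS s hs).compl.isOpen.nhdsSet_eq, disjoint_principal_left, compl_compl]
    exact (hS s hs).isOpen.mem_nhds hx

theorem ultrafilter_le_nhds_iff_of_eq_generateFrom
    (hτ : τ = .generateFrom (range H ∪ compl '' range H)) (U : Ultrafilter X) (x : X) :
    ↑U ≤ 𝓝 x ↔ ∀ j, H j ∈ U ↔ x ∈ H j := by
  constructor
  · intro hU j
    have hj := isClopen_of_eq_generateFrom hτ j
    refine ⟨fun hjU ↦ ?_, fun hx ↦ hU (hj.isOpen.mem_nhds hx)⟩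
    by_contra hx
    exact Ultrafilter.compl_mem_iff_notMem.1 (hU (hj.compl.isOpen.mem_nhds hx)) hjU
  · intro h
    rw [hτ, TopologicalSpace.nhds_generateFrom]
    refine le_iInf₂ ?_
    rintro _ ⟨hx, ⟨j, rfl⟩ | ⟨_, ⟨j, rfl⟩, rfl⟩⟩
    · exact le_principal_iff.2 ((h j).2 hx)
    · exact le_principal_iff.2 (Ultrafilter.compl_mem_iff_notMem.2 (mt (h j).1 hx))

theorem locallyCompactSpace_of_eq_generateFrom
    (hτ : τ = .generateFrom (range H ∪ compl '' range H))
    (hcover : ∀ x, ∃ j, x ∈ H j) (hcompact : ∀ j, IsCompact (H j)) : LocallyCompactSpace X := by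
  have hclopen := isClopen_of_eq_generateFrom hτ
  have : RegularSpace X := regularSpace_of_eq_generateFrom_isClopen hτ <| by
    rintro _ (⟨j, rfl⟩ | ⟨_, ⟨j, rfl⟩, rfl⟩)
    exacts [hclopen j, (hclopen j).compl]
  have : WeaklyLocallyCompactSpace X := ⟨fun x ↦
    let ⟨j, hx⟩ := hcover x
    ⟨H j, hcompact j, (hclopen j).isOpen.mem_nhds hx⟩⟩
  infer_instance

end ClopenSubbase

/-- `s` belongs to the ideal of sets generated by the `H γ` with `γ < β`: the sets that are
negligible for an ultrafilter that contains no `H γ` with `γ < β`. -/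
def CoveredBelow {ι X : Type*} [LT ι] (H : ι → Set X) (β : ι) (s : Set X) : Prop :=
  ∃ F : Finset ι, (∀ γ ∈ F, γ < β) ∧ s ⊆ ⋃ γ ∈ F, H γ

theorem CoveredBelow.notMem_ultrafilter {ι X : Type*} [LT ι] {H : ι → Set X} {β : ι} {s : Set X}
    (hs : CoveredBelow H β s) {U : Ultrafilter X} (hmin : ∀ γ < β, H γ ∉ U) : s ∉ U := by
  obtain ⟨F, hF, hsF⟩ := hs
  intro hsU
  obtain ⟨γ, hγ, hγU⟩ :=
    (Ultrafilter.finite_biUnion_mem_iff F.finite_toSet).1 (mem_of_superset hsU hsF)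
  exact hmin γ (hF γ hγ) hγU

section CoveredBelow

variable {X : Type*} {H : X → Set X} {α β : X}

theorem mem_ultrafilter_iff_of_coveredBelow [LT X]
    (hdiff : β ∈ H α → CoveredBelow H β (H β \ H α))
    (hinter : β ∉ H α → CoveredBelow H β (H β ∩ H α))
    {U : Ultrafilter X} (hβ : H β ∈ U) (hmin : ∀ γ < β, H γ ∉ U) : H α ∈ U ↔ β ∈ H α := by
  constructor
  · intro hα
    by_contra hmem
    exact (hinter hmem).notMem_ultrafilter hmin (inter_mem hβ hα)
  · intro hmem
    by_contra hα
    exact (hdiff hmem).notMem_ultrafilter hmin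
      (inter_mem hβ (Ultrafilter.compl_mem_iff_notMem.2 hα))

theorem isCompact_of_coveredBelow [LT X] [WellFoundedLT X] [τ : TopologicalSpace X]
    (hτ : τ = .generateFrom (range H ∪ compl '' range H))
    (hdiff : ∀ α β, β ∈ H α → CoveredBelow H β (H β \ H α))
    (hinter : ∀ α β, β ∉ H α → CoveredBelow H β (H β ∩ H α)) (α : X) : IsCompact (H α) := by
  refine isCompact_iff_ultrafilter_le_nhds'.2 fun U hα ↦ ?_
  obtain ⟨β, hβ, hmin⟩ := wellFounded_lt.has_min {β | H β ∈ U} ⟨α, hα⟩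
  have hU (γ : X) : H γ ∈ U ↔ β ∈ H γ :=
    mem_ultrafilter_iff_of_coveredBelow (hdiff γ β) (hinter γ β) hβ
      fun δ hδ hδU ↦ hmin δ hδU hδ
  exact ⟨β, (hU α).1 hα, (ultrafilter_le_nhds_iff_of_eq_generateFrom hτ U β).2 hU⟩

theorem coveredBelow_diff [PartialOrder X] (hsub : H α ⊆ Iic α)
    (hcov : β < α → CoveredBelow H β (H β \ H α)) (hβ : β ∈ H α) :
    CoveredBelow H β (H β \ H α) := by
  rcases (hsub hβ).eq_or_lt with rfl | hlt
  · exact ⟨∅, by simp⟩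
  · exact hcov hlt

theorem coveredBelow_inter [PartialOrder X] (hmem : β ∈ H β)
    (hcov : ¬α ≤ β → CoveredBelow H β (H β ∩ H α)) (hβ : β ∉ H α) :
    CoveredBelow H β (H β ∩ H α) := by
  by_cases hle : α ≤ β
  · have hlt : α < β := hle.lt_of_ne fun h ↦ hβ (h ▸ hmem)
    exact ⟨{α}, by simpa using hlt, by simp⟩
  · exact hcov hle

end CoveredBelow

theorem stmt2_general {X : Type*} [PartialOrder X] [WellFoundedLT X]
    (H : X → Set X)
    (hmem : ∀ α, α ∈ H α) (hsub : ∀ α, H α ⊆ Iic α)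
    (i : X → X → Finset X)
    (hilt : ∀ α β γ, γ ∈ i α β → γ < β)
    (hcov1 : ∀ β α, β < α → β ∈ H α → H β \ H α ⊆ ⋃ γ ∈ i α β, H γ)
    (hcov2 : ∀ β α, ¬α ≤ β → β ∉ H α → H β ∩ H α ⊆ ⋃ γ ∈ i α β, H γ)
    [τ : TopologicalSpace X]
    (hτ : τ = .generateFrom (range H ∪ compl '' range H)) :
    (∀ α, IsCompact (H α)) ∧ LocallyCompactSpace X := by
  have hcompact : ∀ α, IsCompact (H α) := isCompact_of_coveredBelow hτ
    (fun α β hβ ↦ coveredBelow_diff (hsub α)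
      (fun hlt ↦ ⟨i α β, hilt α β, hcov1 β α hlt hβ⟩) hβ)
    (fun α β hβ ↦ coveredBelow_inter (hmem β)
      (fun hle ↦ ⟨i α β, hilt α β, hcov2 β α hle hβ⟩) hβ)
  exact ⟨hcompact, locallyCompactSpace_of_eq_generateFrom hτ (fun α ↦ ⟨α, hmem α⟩) hcompact⟩

theorem stmt2
    (H : Om2 → Set Om2)
    (hmem : ∀ α, α ∈ H α) (hsub : ∀ α, H α ⊆ Set.Iic α)
    (i : Om2 → Om2 → Finset Om2)
    (hisymm : ∀ α β, i α β = i β α)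
    (hilt : ∀ α β γ, γ ∈ i α β → γ < α ∧ γ < β)
    (hcov1 : ∀ β α, β < α → β ∈ H α → H β \ H α ⊆ ⋃ γ ∈ i α β, H γ)
    (hcov2 : ∀ β α, β < α → β ∉ H α → H β ∩ H α ⊆ ⋃ γ ∈ i α β, H γ)
    (τ : TopologicalSpace Om2)
    (hτ : τ = TopologicalSpace.generateFrom
      (Set.range H ∪ (fun s => sᶜ) '' Set.range H)) :
    (∀ α, @IsCompact Om2 τ (H α)) ∧ @LocallyCompactSpace Om2 τ :=
  stmt2_general H hmem hsub i (fun α β γ hγ ↦ (hilt α β γ hγ).2) hcov1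
    (fun β α hle ↦ hcov2 β α (not_le.1 hle)) hτ
end
end

section
/- Let τ be a separable Hausdorff topology on ω₂ and let {H(α) : α < ω₂} be a family of τ-compact τ-open sets with α ∈ H(α) ⊆ α + 1 (i.e. max H(α) = α) for every α < ω₂. If the family is coherent, i.e. β ∈ H(α) implies H(β) ⊆ H(α), then the space (ω₂, τ) has countable tightness. -/
noncomputable section

/-!
Coherence makes `⋃ y ∈ K, H y` a finite union of sets `H y`, hence closed, whenever `K` is compact.
Given `x ∈ closure A`, separability yields a countable `C ⊆ A ∩ H x` whose sets `H c` have a union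
dense in that of all `H a`, `a ∈ A ∩ H x`. Hence the closed set `⋃ y ∈ closure C, H y` contains
`A ∩ H x`, and so also `x`: some `y ∈ closure C` has `x ∈ H y`. But `closure C ⊆ H x`, so `x` and
`y` lie in each other's sets, which forces `y = x`.
-/

open Set Topology TopologicalSpace

section

variable {X : Type*}

/-- Countable tightness: closures are determined by the closures of countable subsets. -/
def CountablyTight (X : Type*) [TopologicalSpace X] : Prop :=
  ∀ A : Set X, ∀ x, x ∈ closure A → ∃ B ⊆ A, B.Countable ∧ x ∈ closure B

/-- Coherence of an assignment of a set `H x` to each point `x`: the relation `y ∈ H x` is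
transitive. -/
def IsCoherent (H : X → Set X) : Prop :=
  ∀ x y, y ∈ H x → H y ⊆ H x

theorem IsCoherent.eq_of_mem_of_mem {H : X → Set X} (hcoh : IsCoherent H)
    (hinj : Function.Injective H) {x y : X} (hxy : x ∈ H y) (hyx : y ∈ H x) : x = y :=
  hinj ((hcoh y x hxy).antisymm (hcoh x y hyx))

variable [TopologicalSpace X]

theorem IsCoherent.isClosed_biUnion {H : X → Set X} (hcoh : IsCoherent H)
    (hclosed : ∀ x, IsClosed (H x)) (hnhds : ∀ x, H x ∈ 𝓝 x) {K : Set X} (hK : IsCompact K) :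
    IsClosed (⋃ y ∈ K, H y) := by
  obtain ⟨t, htK, hKt⟩ := hK.elim_nhds_subcover H fun y _ => hnhds y
  have hfinite : ⋃ y ∈ K, H y = ⋃ y ∈ t, H y := by
    refine (iUnion₂_subset fun z hz => ?_).antisymm (biUnion_subset_biUnion_left htK)
    obtain ⟨y, hyt, hzy⟩ := mem_iUnion₂.1 (hKt hz)
    exact (hcoh y z hzy).trans (subset_biUnion_of_mem (u := H) hyt)
  rw [hfinite]
  exact t.finite_toSet.isClosed_biUnion fun y _ => hclosed y

theorem exists_countable_biUnion_subset_closure_biUnion [SeparableSpace X] {ι : Type*}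
    {U : ι → Set X} {s : Set ι} (hU : ∀ i ∈ s, IsOpen (U i)) :
    ∃ t ⊆ s, t.Countable ∧ ⋃ i ∈ s, U i ⊆ closure (⋃ i ∈ t, U i) := by
  obtain ⟨D, hDc, hD⟩ := exists_countable_dense X
  let E : Set X := (⋃ i ∈ s, U i) ∩ D
  have : Countable E := (hDc.mono inter_subset_right).to_subtype
  have hE (d : E) : ∃ i ∈ s, d.1 ∈ U i := by simpa only [mem_iUnion₂, exists_prop] using d.2.1
  choose i his hdi using hE
  refine ⟨range i, range_subset_iff.2 his, countable_range i, ?_⟩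
  calc ⋃ i ∈ s, U i ⊆ closure E := hD.open_subset_closure_inter (isOpen_biUnion hU)
    _ ⊆ closure (⋃ j ∈ range i, U j) :=
      closure_mono fun d hd => mem_biUnion (mem_range_self ⟨d, hd⟩) (hdi ⟨d, hd⟩)

theorem stmt3_general [T2Space X] [SeparableSpace X] {H : X → Set X}
    (hcomp : ∀ x, IsCompact (H x)) (hopen : ∀ x, IsOpen (H x)) (hmem : ∀ x, x ∈ H x)
    (hinj : Function.Injective H) (hcoh : IsCoherent H) : CountablyTight X := by
  intro A x hx
  obtain ⟨C, hCA, hCc, hC⟩ :=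
    exists_countable_biUnion_subset_closure_biUnion (s := A ∩ H x) fun y _ => hopen y
  refine ⟨C, hCA.trans inter_subset_left, hCc, ?_⟩
  have hCH : closure C ⊆ H x := closure_minimal (hCA.trans inter_subset_right) (hcomp x).isClosed
  have hclosed : IsClosed (⋃ y ∈ closure C, H y) :=
    hcoh.isClosed_biUnion (fun y => (hcomp y).isClosed) (fun y => (hopen y).mem_nhds (hmem y))
      ((hcomp x).of_isClosed_subset isClosed_closure hCH)
  have hcover : A ∩ H x ⊆ ⋃ y ∈ closure C, H y :=
    calc A ∩ H x ⊆ ⋃ y ∈ A ∩ H x, H y := fun y hy => mem_biUnion hy (hmem y)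
      _ ⊆ closure (⋃ y ∈ C, H y) := hC
      _ ⊆ ⋃ y ∈ closure C, H y :=
        closure_minimal (biUnion_subset_biUnion_left subset_closure) hclosed
  have hxA : x ∈ closure (A ∩ H x) := (hopen x).closure_inter ⟨hx, hmem x⟩
  obtain ⟨y, hyC, hxy⟩ := mem_iUnion₂.1 (closure_minimal hcover hclosed hxA)
  exact hcoh.eq_of_mem_of_mem hinj hxy (hCH hyC) ▸ hyC

end

theorem stmt3
    (τ : TopologicalSpace Om2) (hT2 : @T2Space Om2 τ)
    (hsep : ∃ D : Set Om2, D.Countable ∧ @Dense Om2 τ D)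
    (H : Om2 → Set Om2)
    (hcomp : ∀ α, @IsCompact Om2 τ (H α))
    (hopen : ∀ α, @IsOpen Om2 τ (H α))
    (hmem : ∀ α, α ∈ H α) (hsub : ∀ α, H α ⊆ Set.Iic α)
    (hcoh : ∀ α β, β ∈ H α → H β ⊆ H α) :
    ∀ A : Set Om2, ∀ x, x ∈ @closure Om2 τ A →
      ∃ B ⊆ A, B.Countable ∧ x ∈ @closure Om2 τ B := by
  have : SeparableSpace Om2 := ⟨hsep⟩
  exact stmt3_general hcomp hopen hmem
    (fun α β h => (hsub β (h ▸ hmem α)).antisymm (hsub α (h ▸ hmem β))) hcoh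
end
end

section
/- If a topological space X is initially ω₁-compact and has countable tightness, then X contains no free sequence of length ω₁, i.e. there is no free sequence {y_ξ : ξ < ω₁} in X. -/
noncomputable section

/-- A space is initially ω₁-compact if every open cover of cardinality at most ℵ₁
has a finite subcover. -/
def InitiallyOmega1Compact (X : Type*) [TopologicalSpace X] : Prop :=
  ∀ U : Set (Set X), (∀ u ∈ U, IsOpen u) → ⋃₀ U = Set.univ →
    Cardinal.mk ↥U ≤ Cardinal.aleph 1 →
    ∃ V ⊆ U, V.Finite ∧ ⋃₀ V = Set.univ

/-- A space has countable tightness if every point in the closure of a set `A` is in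
the closure of a countable subset of `A`. -/
def CountableTightness (X : Type*) [TopologicalSpace X] : Prop :=
  ∀ A : Set X, ∀ x ∈ closure A, ∃ B ⊆ A, B.Countable ∧ x ∈ closure B

/-- `y` (restricted to the ordinals below `μ`) is a free sequence of length `μ`. -/
def IsFreeSequence {X : Type*} [TopologicalSpace X] (μ : Ordinal) (y : Ordinal → X) : Prop :=
  ∀ η < μ, Disjoint (closure (y '' Set.Iio η)) (closure (y '' Set.Ico η μ))

/-!
The closures of the tails of a free sequence of length `κ`, with `κ` regular, form a decreasing
`κ`-sequence of nonempty closed sets, so compactness yields a point `x` common to all of them. By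
tightness `x` lies in the closure of fewer than `κ` terms, hence, by regularity, of a proper initial
segment, which freeness makes disjoint from the closure of the corresponding tail.
-/

open Set
open Cardinal hiding univ
open Ordinal hiding univ

universe u v w

/-- `[κ, κ]`-compactness in the sense of Alexandroff and Urysohn: every open cover of cardinality
at most `κ` has a subcover of cardinality less than `κ`. It is the part of initial `κ`-compactness
that forces decreasing `κ`-sequences of nonempty closed sets to have a common point. The space and
the cardinal may live in different universes. -/
def AlexandroffUrysohnCompact (κ : Cardinal.{w}) (X : Type v) [TopologicalSpace X] : Prop :=
  ∀ U : Set (Set X), (∀ u ∈ U, IsOpen u) → ⋃₀ U = univ →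
    Cardinal.lift.{w} #U ≤ Cardinal.lift.{v} κ →
    ∃ V ⊆ U, HasCardinalLT V κ ∧ ⋃₀ V = univ

/-- Tightness below `κ`: closures are determined by subsets of cardinality less than `κ`. For
`κ = λ⁺` this says that the tightness of `X` is at most `λ`, so that countable tightness is the case
`κ = ℵ₁`. -/
def TightnessLT (κ : Cardinal.{w}) (X : Type v) [TopologicalSpace X] : Prop :=
  ∀ A : Set X, ∀ x ∈ closure A, ∃ B ⊆ A, HasCardinalLT B κ ∧ x ∈ closure B

theorem exists_forall_lt_of_hasCardinalLT {κ : Cardinal.{w}} (hκ : κ.IsRegular) {ι : Type u}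
    (hι : HasCardinalLT ι κ) {f : ι → Ordinal.{w}} (hf : ∀ i, f i < κ.ord) :
    ∃ η < κ.ord, ∀ i, f i < η := by
  have := hι.small
  refine ⟨⨆ i, f i + 1, lift_iSup_add_one_lt_of_lt_cof ?_ hf, fun i => lt_iSup_add_one f i⟩
  rwa [← lift_cof, hκ.cof_ord]

section

variable {X : Type v} [TopologicalSpace X] {κ : Cardinal.{w}}

theorem InitiallyOmega1Compact.alexandroffUrysohnCompact (hX : InitiallyOmega1Compact X) :
    AlexandroffUrysohnCompact (ℵ₁ : Cardinal.{w}) X := by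
  intro U hopen hcover hcard
  obtain ⟨V, hVU, hVfin, hV⟩ := hX U hopen hcover (by simpa using hcard)
  have := hVfin.to_subtype
  exact ⟨V, hVU, hasCardinalLT_of_finite V _ (aleph0_le_aleph 1), hV⟩

theorem CountableTightness.tightnessLT (hX : CountableTightness X) :
    TightnessLT (ℵ₁ : Cardinal.{w}) X := by
  intro A x hx
  obtain ⟨B, hBA, hB, hxB⟩ := hX A x hx
  refine ⟨B, hBA, ?_, hxB⟩
  rwa [HasCardinalLT, lift_aleph, Ordinal.lift_one, lt_aleph_one_iff, lift_le_aleph0,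
    le_aleph0_iff_set_countable]

theorem AlexandroffUrysohnCompact.nonempty_biInter_of_antitoneOn
    (hX : AlexandroffUrysohnCompact κ X) (hκ : κ.IsRegular) {F : Ordinal.{w} → Set X}
    (hF : AntitoneOn F (Iio κ.ord)) (hclosed : ∀ η < κ.ord, IsClosed (F η))
    (hne : ∀ η < κ.ord, (F η).Nonempty) : (⋂ η < κ.ord, F η).Nonempty := by
  by_contra hempty
  have hcover : ⋃₀ ((fun η => (F η)ᶜ) '' Iio κ.ord) = univ := by
    rw [sUnion_image, ← compl_iInter₂, compl_univ_iff]
    exact not_nonempty_iff_eq_empty.1 hempty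
  have hcard : Cardinal.lift.{w} #((fun η => (F η)ᶜ) '' Iio κ.ord) ≤ Cardinal.lift.{v} κ := by
    have h := mk_image_le_lift (f := fun η => (F η)ᶜ) (s := Iio κ.ord)
    rw [Cardinal.mk_Iio_ordinal, card_ord] at h
    rw [← Cardinal.lift_le.{w + 1}]
    simpa using h
  obtain ⟨V, hVF, hVκ, hV⟩ := hX _ (forall_mem_image.2 fun η hη => (hclosed η hη).isOpen_compl)
    hcover hcard
  choose f hfκ hfV using fun u : V => hVF u.2
  obtain ⟨η, hη, hfη⟩ := exists_forall_lt_of_hasCardinalLT hκ hVκ hfκ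
  obtain ⟨x, hx⟩ := hne η hη
  obtain ⟨u, hu, hxu⟩ := hV.ge (mem_univ x)
  have hxf : x ∈ F (f ⟨u, hu⟩) := hF (hfκ _) hη (hfη _).le hx
  exact (hfV ⟨u, hu⟩).ge hxu hxf

theorem TightnessLT.exists_mem_closure_image_Iio (hX : TightnessLT κ X) (hκ : κ.IsRegular)
    {y : Ordinal.{w} → X} {x : X} (hx : x ∈ closure (y '' Iio κ.ord)) :
    ∃ η < κ.ord, x ∈ closure (y '' Iio η) := by
  obtain ⟨B, hB, hBκ, hxB⟩ := hX _ x hx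
  choose f hfκ hfB using fun b : B => hB b.2
  obtain ⟨η, hη, hfη⟩ := exists_forall_lt_of_hasCardinalLT hκ hBκ hfκ
  have hBη : B ⊆ y '' Iio η := fun b hb => ⟨f ⟨b, hb⟩, hfη _, hfB ⟨b, hb⟩⟩
  exact ⟨η, hη, closure_mono hBη hxB⟩

theorem stmt5_general (hκ : κ.IsRegular) (hcompact : AlexandroffUrysohnCompact κ X)
    (htight : TightnessLT κ X) : ¬ ∃ y : Ordinal.{w} → X, IsFreeSequence κ.ord y := by
  rintro ⟨y, hy⟩
  obtain ⟨x, hx⟩ : (⋂ η < κ.ord, closure (y '' Ico η κ.ord)).Nonempty :=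
    hcompact.nonempty_biInter_of_antitoneOn hκ
      (fun _ _ _ _ h => closure_mono (image_mono (Ico_subset_Ico_left h)))
      (fun _ _ => isClosed_closure)
      (fun η hη => ((nonempty_Ico.2 hη).image y).closure)
  have htail : ∀ η < κ.ord, x ∈ closure (y '' Ico η κ.ord) := mem_iInter₂.1 hx
  obtain ⟨η, hη, hinitial⟩ := htight.exists_mem_closure_image_Iio hκ
    (closure_mono (image_mono Ico_subset_Iio_self) (htail 0 hκ.ord_pos))
  exact disjoint_left.1 (hy η hη) hinitial (htail η hη)

end

theorem stmt5 {X : Type*} [TopologicalSpace X]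
    (hinit : InitiallyOmega1Compact X) (ht : CountableTightness X) :
    ¬ ∃ y : Ordinal → X, IsFreeSequence ((Cardinal.aleph 1).ord) y :=
  stmt5_general isRegular_aleph_one hinit.alexandroffUrysohnCompact ht.tightnessLT
end
end

section
/- Every non-compact, initially ω₁-compact topological space of countable tightness contains a countable subset whose closure is not compact. -/
/-!
Let `κ` be an infinite cardinal, and suppose that sets of size at most `κ` have compact closure
while `X` has an open cover `U` without a finite subcover. By initial `κ⁺`-compactness no `κ`
members of `U` cover `X`, so by recursion there are points `x i` and increasing open sets `G i`, for
`i < κ⁺`, such that `G i` contains the closure of `{x j | j < i}` but not `x i`. Since `κ⁺` is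
regular, tightness `κ` makes the `G i` cover the closure of `{x i | i < κ⁺}`. Initial
`κ⁺`-compactness then makes a single `G i` contain this closure, although `x i ∉ G i`.
-/

noncomputable section

open Set Order
open Cardinal hiding univ

universe u

/-- A space is initially `κ`-compact if every open cover of cardinality at most `κ` has a finite
subcover; this is the form of `InitiallyOmega1Compact` for an arbitrary cardinal. -/
def InitiallyCompact (X : Type u) [TopologicalSpace X] (κ : Cardinal.{u}) : Prop :=
  ∀ U : Set (Set X), (∀ u ∈ U, IsOpen u) → ⋃₀ U = univ → #U ≤ κ →
    ∃ V ⊆ U, V.Finite ∧ ⋃₀ V = univ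

/-- A space has tightness at most `κ` if every point in the closure of a set `A` is in the closure
of a subset of `A` of cardinality at most `κ`; this is the form of `CountableTightness` for an
arbitrary cardinal. -/
def TightnessLE (X : Type u) [TopologicalSpace X] (κ : Cardinal.{u}) : Prop :=
  ∀ A : Set X, ∀ x ∈ closure A, ∃ B ⊆ A, #B ≤ κ ∧ x ∈ closure B

section

variable {X : Type u} [TopologicalSpace X] {κ : Cardinal.{u}}

theorem initiallyOmega1Compact_iff : InitiallyOmega1Compact X ↔ InitiallyCompact X (succ ℵ₀) := by
  rw [succ_aleph0]
  rfl

theorem countableTightness_iff : CountableTightness X ↔ TightnessLE X ℵ₀ := by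
  simp only [CountableTightness, TightnessLE, le_aleph0_iff_set_countable]

theorem InitiallyCompact.elim_finite_subcover (hX : InitiallyCompact X κ) {C : Set X}
    (hC : IsClosed C) {ι : Type u} (hι : #ι ≤ κ) (U : ι → Set X) (hUo : ∀ i, IsOpen (U i))
    (hCU : C ⊆ ⋃ i, U i) : ∃ t : Finset ι, C ⊆ ⋃ i ∈ t, U i := by
  obtain rfl | ⟨x₀, hx₀⟩ := C.eq_empty_or_nonempty
  · exact ⟨∅, empty_subset _⟩
  have : Nonempty ι := (mem_iUnion.1 (hCU hx₀)).nonempty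
  -- Adding `Cᶜ` to every member, rather than as a further member, keeps the cover of size `#ι`.
  have hcover : ⋃₀ range (fun i ↦ Cᶜ ∪ U i) = univ := by
    rw [sUnion_range, ← union_iUnion, ← compl_subset_iff_union, compl_compl]
    exact hCU
  obtain ⟨V, hVU, hV, hVcover⟩ := hX _
    (forall_mem_range.2 fun i ↦ hC.isOpen_compl.union (hUo i)) hcover (mk_range_le.trans hι)
  choose! a ha using hVU
  refine ⟨(hV.image a).toFinset, fun x hx ↦ ?_⟩
  obtain ⟨v, hv, hxv⟩ : x ∈ ⋃₀ V := hVcover ▸ mem_univ x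
  rw [← ha hv] at hxv
  exact mem_biUnion (by simpa using ⟨v, hv, rfl⟩) (hxv.resolve_left (not_not_intro hx))

theorem InitiallyCompact.elim_directed_cover (hX : InitiallyCompact X κ) {C : Set X}
    (hC : IsClosed C) {ι : Type u} [Nonempty ι] (hι : #ι ≤ κ) (U : ι → Set X)
    (hUo : ∀ i, IsOpen (U i)) (hCU : C ⊆ ⋃ i, U i) (hdU : Directed (· ⊆ ·) U) :
    ∃ i, C ⊆ U i := by
  obtain ⟨t, ht⟩ := hX.elim_finite_subcover hC hι U hUo hCU
  obtain ⟨i, hi⟩ := hdU.finset_le t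
  exact ⟨i, ht.trans (iUnion₂_subset hi)⟩

theorem TightnessLE.closure_range_subset (hX : TightnessLE X κ) {I : Type u} [LinearOrder I]
    (hI : κ < cof I) (x : I → X) : closure (range x) ⊆ ⋃ i, closure (x '' Iio i) := by
  intro y hy
  obtain ⟨B, hBx, hB, hyB⟩ := hX _ y hy
  choose a ha using hBx
  obtain ⟨i, hi⟩ : ∃ i, ∀ j ∈ range fun b : B ↦ a b.2, j < i :=
    not_isCofinal_iff.1 fun h ↦ (cof_le h).not_gt ((mk_range_le.trans hB).trans_lt hI)
  have hBi : B ⊆ x '' Iio i := fun b hb ↦ ⟨a hb, hi _ ⟨⟨b, hb⟩, rfl⟩, ha hb⟩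
  exact mem_iUnion.2 ⟨i, closure_mono hBi hyB⟩

end

theorem exists_forall_eq_biUnion_image_Iio {I X Y : Type*} [Preorder I] [WellFoundedLT I]
    (c : Set X → Set Y) (d : Set Y → X) :
    ∃ x : I → X, ∀ i, x i = d (⋃ j ∈ Iic i, c (x '' Iio j)) := by
  let step (i : I) (x : ∀ j, j < i → X) : X :=
    d (⋃ j, ⋃ hj : j ≤ i, c {y | ∃ k, ∃ hk : k < j, x k (hk.trans_le hj) = y})
  refine ⟨wellFounded_lt.fix step, fun i ↦ ?_⟩
  rw [wellFounded_lt.fix_eq]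
  simp [step, image]

theorem mk_Iic_toType_ord_succ_le {κ : Cardinal.{u}} (hκ : ℵ₀ ≤ κ) (i : (succ κ).ord.ToType) :
    #(Iic i) ≤ κ := by
  rw [← Iio_insert]
  refine mk_insert_le.trans (add_le_of_le hκ (lt_succ_iff.1 ?_) (one_le_aleph0.trans hκ))
  simpa using mk_Iio_lt i (by simp)

theorem lt_cof_toType_ord_succ {κ : Cardinal.{u}} (hκ : ℵ₀ ≤ κ) :
    κ < cof (succ κ).ord.ToType := by
  rw [Ordinal.cof_toType, (isRegular_succ hκ).cof_ord]
  exact lt_succ κ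

theorem exists_monotone_isOpen_closure_image_Iio_subset {X I ι : Type u} [TopologicalSpace X]
    [Preorder I] [WellFoundedLT I] {κ : Cardinal.{u}} (hκ : ℵ₀ ≤ κ) (hI : ∀ i : I, #(Iic i) ≤ κ)
    {U : ι → Set X} (hUo : ∀ a, IsOpen (U a))
    (hclosure : ∀ S : Set X, #S ≤ κ → ∃ A : Set ι, #A ≤ κ ∧ closure S ⊆ ⋃ a ∈ A, U a)
    (hUκ : ∀ A : Set ι, #A ≤ κ → ∃ y, y ∉ ⋃ a ∈ A, U a) :
    ∃ (x : I → X) (G : I → Set X), Monotone G ∧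
      ∀ i, IsOpen (G i) ∧ closure (x '' Iio i) ⊆ G i ∧ x i ∉ G i := by
  obtain ⟨y₀, -⟩ := hUκ ∅ (by simp)
  have : Nonempty X := ⟨y₀⟩
  choose! c hc hcU using hclosure
  choose! d hd using hUκ
  obtain ⟨x, hx⟩ := exists_forall_eq_biUnion_image_Iio (I := I) c d
  let A (i : I) : Set ι := ⋃ j ∈ Iic i, c (x '' Iio j)
  have hS (i : I) : #(x '' Iio i) ≤ κ :=
    mk_image_le.trans ((mk_le_mk_of_subset Iio_subset_Iic_self).trans (hI i))
  have hA (i : I) : #(A i) ≤ κ :=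
    (mk_biUnion_le _ _).trans (mul_le_of_le hκ (hI i) (ciSup_le' fun j ↦ hc _ (hS j)))
  refine ⟨x, fun i ↦ ⋃ a ∈ A i, U a, fun i j hij ↦ ?_, fun i ↦ ⟨?_, ?_, ?_⟩⟩
  · exact biUnion_subset_biUnion_left (biUnion_subset_biUnion_left (Iic_subset_Iic.2 hij))
  · exact isOpen_biUnion fun a _ ↦ hUo a
  · have hcA : c (x '' Iio i) ⊆ A i :=
      subset_biUnion_of_mem (u := fun j ↦ c (x '' Iio j)) self_mem_Iic
    exact (hcU _ (hS i)).trans (biUnion_subset_biUnion_left hcA)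
  · exact hx i ▸ hd _ (hA i)

theorem stmt6_general {X : Type u} [TopologicalSpace X] {κ : Cardinal.{u}} (hκ : ℵ₀ ≤ κ)
    (hnc : ¬ IsCompact (univ : Set X)) (hinit : InitiallyCompact X (succ κ))
    (ht : TightnessLE X κ) : ∃ S : Set X, #S ≤ κ ∧ ¬ IsCompact (closure S) := by
  by_contra! hcpt
  refine hnc (isCompact_of_finite_subcover fun {ι} U hUo hU ↦ ?_)
  by_contra! hfin
  have hclosure (S : Set X) (hS : #S ≤ κ) : ∃ A : Set ι, #A ≤ κ ∧ closure S ⊆ ⋃ a ∈ A, U a := by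
    obtain ⟨t, hSt⟩ := (hcpt S hS).elim_finite_subcover U hUo ((subset_univ _).trans hU)
    exact ⟨t, t.finite_toSet.lt_aleph0.le.trans hκ, hSt⟩
  have hUκ (A : Set ι) (hA : #A ≤ κ) : ∃ y, y ∉ ⋃ a ∈ A, U a := by
    by_contra! h
    obtain ⟨t, hcover⟩ := hinit.elim_finite_subcover isClosed_univ (hA.trans (le_succ κ))
      (fun a : A ↦ U a) (fun a ↦ hUo a) (by simpa [subset_def] using h)
    exact hfin (t.map (.subtype _)) (by simpa using hcover)
  obtain ⟨x, G, hG, hxG⟩ := exists_monotone_isOpen_closure_image_Iio_subset hκ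
    (mk_Iic_toType_ord_succ_le hκ) hUo hclosure hUκ
  have hcof := lt_cof_toType_ord_succ hκ
  have : Nonempty (succ κ).ord.ToType := cof_ne_zero_iff.1 hcof.ne_bot
  obtain ⟨i, hi⟩ := hinit.elim_directed_cover isClosed_closure (mk_ord_toType _).le G
    (fun i ↦ (hxG i).1)
    ((ht.closure_range_subset hcof x).trans (iUnion_mono fun i ↦ (hxG i).2.1)) hG.directed_le
  exact (hxG i).2.2 (hi (subset_closure (mem_range_self i)))

theorem stmt6 {X : Type*} [TopologicalSpace X]
    (hnc : ¬ IsCompact (Set.univ : Set X))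
    (hinit : InitiallyOmega1Compact X) (ht : CountableTightness X) :
    ∃ S : Set X, S.Countable ∧ ¬ IsCompact (closure S) := by
  simpa only [le_aleph0_iff_set_countable] using stmt6_general le_rfl hnc
    (initiallyOmega1Compact_iff.1 hinit) (countableTightness_iff.1 ht)
end
end

section
/- Let X be a locally compact Hausdorff, initially ω₁-compact, non-compact space of countable tightness, and let αX = X ∪ {p} be its one-point compactification. Then αX has countable tightness; moreover X is a non-closed subset of αX (so X is an initially ω₁-compact non-closed subspace of the countably tight compact space αX). -/
noncomputable section

/-!
A neighbourhood of the point at infinity is the complement of a closed compact set, so infinity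
lies in the closure of `A ⊆ X` iff `closure A` is not compact. Countable tightness of `αX` at
infinity therefore says that `closure A` is compact as soon as all countable subsets of `A` have
compact closure.

Suppose this fails and put `Y = closure A`; by countable tightness the countable subsets of `Y`
have compact closure as well. A non-compact closed set is not covered by countably many compact
sets, so by recursion on `a < ω₁` one can choose points `x a ∈ Y` and compact sets `K a` such that
`K a` is a neighbourhood of the closure of `{x b | b < a}` and `x a ∉ K b` for `b < a`. By countable
tightness the interiors of the `K a` cover the closure of `{x a | a < ω₁}`, so finitely many of them
do; but the points `x a` with large `a` avoid any finitely many `K b`.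
-/

open Set TopologicalSpace
open scoped Cardinal Ordinal

section WellOrder

variable {ι : Type*}

theorem exists_forall_mem_lt_of_countable_Iio [LinearOrder ι] [Uncountable ι]
    (hι : ∀ a : ι, (Iio a).Countable) {s : Set ι} (hs : s.Countable) : ∃ a, ∀ b ∈ s, b < a := by
  have hIic : (⋃ b ∈ s, Iic b).Countable := hs.biUnion fun b _ => by
    rw [← Iio_insert]
    exact (hι b).insert b
  obtain ⟨a, ha⟩ : ∃ a, a ∉ ⋃ b ∈ s, Iic b := by
    by_contra! h
    exact not_countable_univ (hIic.mono fun a _ => h a)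
  exact ⟨a, fun b hb => not_le.1 fun hab => ha (mem_biUnion hb hab)⟩

theorem exists_forall_image_Iio_of_countable [Preorder ι] [WellFoundedLT ι]
    (hι : ∀ a : ι, (Iio a).Countable) {α : Type*} {P : Set α → α → Prop}
    (hP : ∀ s : Set α, s.Countable → ∃ y, P s y) : ∃ f : ι → α, ∀ a, P (f '' Iio a) (f a) := by
  have : Nonempty α := ⟨(hP ∅ countable_empty).choose⟩
  choose! F hF using hP
  let f : ι → α := wellFounded_lt.fix fun a g => F (range fun b : Iio a => g b b.2)
  have hf (a : ι) : f a = F (f '' Iio a) :=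
    (wellFounded_lt.fix_eq _ a).trans (by rw [image_eq_range])
  refine ⟨f, fun a => ?_⟩
  rw [hf a]
  exact hF _ ((hι a).image f)

theorem countable_Iio_toType_omega_one (a : (ω₁ : Ordinal).ToType) : (Iio a).Countable := by
  rw [← Cardinal.le_aleph0_iff_set_countable, ← Order.lt_succ_iff, Cardinal.succ_aleph0]
  simpa using Cardinal.mk_Iio_lt a (by simp)

end WellOrder

/-- A subset `A` of `X` is ω-bounded if its countable subsets have compact closure. The closures
are taken in `X`, so they need not be contained in `A`. -/
def OmegaBounded {X : Type*} [TopologicalSpace X] (A : Set X) : Prop :=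
  ∀ B ⊆ A, B.Countable → IsCompact (closure B)

section Compactness

variable {X : Type*} [TopologicalSpace X]

theorem OmegaBounded.closure {A : Set X} (hA : OmegaBounded A) (ht : CountableTightness X) :
    OmegaBounded (closure A) := by
  intro C hCA hC
  choose! B hBA hBc hxB using fun x (hx : x ∈ C) => ht A x (hCA hx)
  refine (hA (⋃ x ∈ C, B x) (iUnion₂_subset hBA) (hC.biUnion hBc)).of_isClosed_subset
    isClosed_closure (closure_minimal (fun x hx => ?_) isClosed_closure)
  exact closure_mono (subset_biUnion_of_mem hx) (hxB x hx)

theorem CountableTightness.closure_range_subset_iUnion (ht : CountableTightness X) {ι : Type*}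
    [LinearOrder ι] [Uncountable ι] (hι : ∀ a : ι, (Iio a).Countable) (x : ι → X) :
    closure (range x) ⊆ ⋃ a, closure (x '' Iio a) := by
  intro y hy
  obtain ⟨B, hB, hBc, hyB⟩ := ht _ y hy
  obtain ⟨s, rfl, hinj⟩ := exists_image_eq_injOn_of_subset_range hB
  obtain ⟨a, ha⟩ := exists_forall_mem_lt_of_countable_Iio hι
    (countable_of_injective_of_countable_image hinj hBc)
  exact mem_iUnion.2 ⟨a, closure_mono (image_mono ha) hyB⟩

namespace InitiallyOmega1Compact

theorem elim_finite_subcover_of_isClosed (hX : InitiallyOmega1Compact X) {Y : Set X}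
    (hY : IsClosed Y) {ι : Type*} (hι : #ι ≤ ℵ₁) (U : ι → Set X) (hU : ∀ i, IsOpen (U i))
    (hYU : Y ⊆ ⋃ i, U i) : ∃ t : Finset ι, Y ⊆ ⋃ i ∈ t, U i := by
  rcases isEmpty_or_nonempty ι with _ | _
  · exact ⟨∅, by simpa using hYU⟩
  have hcover : ⋃₀ range (fun i => U i ∪ Yᶜ) = univ := by
    rw [sUnion_range, ← iUnion_union, ← univ_subset_iff, ← union_compl_self Y]
    exact union_subset_union_left _ hYU
  have hcard : #(range fun i => U i ∪ Yᶜ) ≤ ℵ₁ := by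
    simpa using Cardinal.mk_range_le_lift.trans (Cardinal.lift_le.2 hι)
  obtain ⟨V, hV, hVfin, hVuniv⟩ :=
    hX _ (forall_mem_range.2 fun i => (hU i).union hY.isOpen_compl) hcover hcard
  obtain ⟨s, rfl, hinj⟩ := exists_image_eq_injOn_of_subset_range hV
  refine ⟨(hVfin.of_finite_image hinj).toFinset, fun y hy => ?_⟩
  obtain ⟨_, ⟨i, hi, rfl⟩, hyi⟩ := hVuniv.superset (mem_univ y)
  exact mem_biUnion (by simpa using hi) (hyi.resolve_right (not_not_intro hy))

theorem isCompact_of_subset_iUnion [WeaklyLocallyCompactSpace X] (hX : InitiallyOmega1Compact X)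
    {Y : Set X} (hY : IsClosed Y) {ι : Type*} (hι : #ι ≤ ℵ₁) {K : ι → Set X}
    (hK : ∀ i, IsCompact (K i)) (hYK : Y ⊆ ⋃ i, K i) : IsCompact Y := by
  choose L hL hKL using fun i => exists_compact_superset (hK i)
  obtain ⟨t, ht⟩ := hX.elim_finite_subcover_of_isClosed hY hι (fun i => interior (L i))
    (fun _ => isOpen_interior) (hYK.trans (iUnion_mono hKL))
  exact (t.isCompact_biUnion fun i _ => hL i).of_isClosed_subset hY
    (ht.trans (iUnion₂_mono fun _ _ => interior_subset))

theorem exists_lt_mem_of_closure_image_Iio_subset (hX : InitiallyOmega1Compact X)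
    (ht : CountableTightness X) {ι : Type*} [LinearOrder ι] [Uncountable ι] (hcard : #ι ≤ ℵ₁)
    (hι : ∀ a : ι, (Iio a).Countable) (x : ι → X) {U : ι → Set X} (hU : ∀ a, IsOpen (U a))
    (hxU : ∀ a, closure (x '' Iio a) ⊆ U a) : ∃ a b, b < a ∧ x a ∈ U b := by
  obtain ⟨t, htU⟩ := hX.elim_finite_subcover_of_isClosed (isClosed_closure (s := range x)) hcard U
    hU ((ht.closure_range_subset_iUnion hι x).trans (iUnion_mono hxU))
  obtain ⟨a, ha⟩ := exists_forall_mem_lt_of_countable_Iio hι t.countable_toSet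
  obtain ⟨b, hb, hab⟩ := mem_iUnion₂.1 (htU (subset_closure (mem_range_self a)))
  exact ⟨a, b, ha b hb, hab⟩

theorem exists_closure_image_Iio_subset_and_notMem [WeaklyLocallyCompactSpace X]
    (hX : InitiallyOmega1Compact X) {Y : Set X} (hY : IsClosed Y) (hYb : OmegaBounded Y)
    (hYc : ¬ IsCompact Y) {ι : Type*} [Preorder ι] [WellFoundedLT ι]
    (hι : ∀ a : ι, (Iio a).Countable) :
    ∃ (x : ι → X) (U : ι → Set X), (∀ a, IsOpen (U a)) ∧ (∀ a, closure (x '' Iio a) ⊆ U a) ∧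
      ∀ a b, b < a → x a ∉ U b := by
  have hstep (s : Set (Y × Compacts X)) (hs : s.Countable) : ∃ q : Y × Compacts X,
      (∀ p ∈ s, (q.1 : X) ∉ p.2) ∧ closure ((fun p => (p.1 : X)) '' s) ⊆ interior q.2 := by
    obtain ⟨y, hyY, hy⟩ : ∃ y ∈ Y, y ∉ ⋃ p : s, (p.1.2 : Set X) :=
      not_subset.1 fun hYs => hYc <| hX.isCompact_of_subset_iUnion hY
        (hs.le_aleph0.trans (Cardinal.aleph0_le_aleph 1)) (fun p => p.1.2.isCompact) hYs
    obtain ⟨K, hK, hsK⟩ := exists_compact_superset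
      (hYb _ (image_subset_iff.2 fun p _ => p.1.2) (hs.image fun p => (p.1 : X)))
    exact ⟨(⟨y, hyY⟩, ⟨K, hK⟩), fun p hp hyp => hy (mem_iUnion.2 ⟨⟨p, hp⟩, hyp⟩), hsK⟩
  obtain ⟨f, hf⟩ := exists_forall_image_Iio_of_countable hι hstep
  refine ⟨fun a => (f a).1, fun a => interior (f a).2, fun a => isOpen_interior, fun a => ?_,
    fun a b hba hmem => (hf a).1 _ (mem_image_of_mem f hba) (interior_subset hmem)⟩
  simpa only [image_image] using (hf a).2

theorem isCompact_of_isClosed_of_omegaBounded [WeaklyLocallyCompactSpace X]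
    (hX : InitiallyOmega1Compact X) (ht : CountableTightness X) {Y : Set X} (hY : IsClosed Y)
    (hYb : OmegaBounded Y) : IsCompact Y := by
  by_contra hYc
  have hcard : #(ω₁ : Ordinal.{0}).ToType = ℵ₁ := by simp
  have : Uncountable (ω₁ : Ordinal.{0}).ToType :=
    Cardinal.aleph0_lt_mk_iff.1 (hcard ▸ Cardinal.aleph0_lt_aleph_one)
  obtain ⟨x, U, hU, hxU, hnotMem⟩ :=
    hX.exists_closure_image_Iio_subset_and_notMem hY hYb hYc countable_Iio_toType_omega_one
  obtain ⟨a, b, hba, hmem⟩ := hX.exists_lt_mem_of_closure_image_Iio_subset ht hcard.le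
    countable_Iio_toType_omega_one x hU hxU
  exact hnotMem a b hba hmem

end InitiallyOmega1Compact

theorem infty_mem_closure_image_coe_iff {A : Set X} :
    OnePoint.infty ∈ closure (((↑) : X → OnePoint X) '' A) ↔ ¬ IsCompact (closure A) := by
  have hfreq : (∃ᶠ x in Filter.coclosedCompact X, x ∈ A) ↔ ¬ IsCompact (closure A) :=
    Filter.compl_mem_coclosedCompact.not
  simp [mem_closure_iff_frequently, OnePoint.nhds_infty_eq, Filter.frequently_sup, hfreq]

theorem CountableTightness.onePoint (ht : CountableTightness X)
    (hX : ∀ A : Set X, OmegaBounded A → IsCompact (closure A)) :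
    CountableTightness (OnePoint X) := by
  intro A p hp
  induction p using OnePoint.rec with
  | infty =>
    by_cases hA : OnePoint.infty ∈ A
    · exact ⟨{OnePoint.infty}, singleton_subset_iff.2 hA, countable_singleton _,
        subset_closure rfl⟩
    obtain ⟨A, rfl⟩ : ∃ A' : Set X, (↑) '' A' = A := by
      rwa [← subset_range_iff_exists_image_eq, ← OnePoint.compl_infty, subset_compl_singleton_iff]
    obtain ⟨B, hBA, hBc, hB⟩ : ∃ B ⊆ A, B.Countable ∧ ¬ IsCompact (closure B) := by
      simpa [OmegaBounded] using mt (hX A) (infty_mem_closure_image_coe_iff.1 hp)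
    exact ⟨(↑) '' B, image_mono hBA, hBc.image _, infty_mem_closure_image_coe_iff.2 hB⟩
  | coe x =>
    have hx : x ∈ closure ((↑) ⁻¹' A) := by
      rwa [← OnePoint.isOpenMap_coe.preimage_closure_eq_closure_preimage OnePoint.continuous_coe]
    obtain ⟨B, hBA, hBc, hxB⟩ := ht _ x hx
    exact ⟨(↑) '' B, image_subset_iff.2 hBA, hBc.image _,
      image_closure_subset_closure_image OnePoint.continuous_coe (mem_image_of_mem _ hxB)⟩

end Compactness

theorem stmt7_general {X : Type*} [TopologicalSpace X] [WeaklyLocallyCompactSpace X]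
    (hnc : ¬ IsCompact (Set.univ : Set X))
    (hinit : InitiallyOmega1Compact X) (ht : CountableTightness X) :
    CountableTightness (OnePoint X) ∧
      ¬ IsClosed (Set.range ((↑) : X → OnePoint X)) := by
  refine ⟨ht.onePoint fun A hA => ?_, fun hclosed => hnc ?_⟩
  · exact hinit.isCompact_of_isClosed_of_omegaBounded ht isClosed_closure (hA.closure ht)
  · rw [← image_univ] at hclosed
    exact (OnePoint.isClosed_image_coe.1 hclosed).2

theorem stmt7 {X : Type*} [TopologicalSpace X] [T2Space X] [LocallyCompactSpace X]
    (hnc : ¬ IsCompact (Set.univ : Set X))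
    (hinit : InitiallyOmega1Compact X) (ht : CountableTightness X) :
    CountableTightness (OnePoint X) ∧
      ¬ IsClosed (Set.range ((↑) : X → OnePoint X)) :=
  stmt7_general hnc hinit ht
end
end

section
/- Let f : [ω₂]² → [ω₂]^{≤ω} satisfy f{α,β} ⊆ α ∩ β for all pairs, and let P_f be the associated poset of finite conditions. Then for each α < ω₂ the set D_α = {p ∈ P_f : α ∈ a^p} is dense in P_f, i.e. every q ∈ P_f has an extension p ≤ q with α ∈ a^p. -/
attribute [local instance] Classical.propDecidable

noncomputable section

/-- The operation `x * y` on nonempty finite sets of ordinals with `max x ≠ max y`: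
`x \ y` if `max x ∈ y`, `y \ x` if `max y ∈ x`, and `x ∩ y` otherwise. -/
def ostar (x y : Finset Ordinal) : Finset Ordinal :=
  if ∃ m ∈ y, x.max = (m : WithBot Ordinal) then x \ y
  else if ∃ m ∈ x, y.max = (m : WithBot Ordinal) then y \ x
  else x ∩ y

/-- The conditions of the poset `P_f`: triples `(a, h, i)` where `a` is a finite
subset of ω₂, `h : a → 𝒫(a)` with `max (h ξ) = ξ`, `i : [a]² → 𝒫(a)` with
`i {ξ,η} ⊆ f {ξ,η}`, and `h ξ * h η ⊆ ⋃ {h ν : ν ∈ i {ξ,η}}`. -/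
structure PfCond (f : Ordinal → Ordinal → Set Ordinal) where
  a : Finset Ordinal
  h : Ordinal → Finset Ordinal
  i : Ordinal → Ordinal → Finset Ordinal
  a_lt : ∀ ξ ∈ a, ξ < omega2
  h_sub : ∀ ξ ∈ a, h ξ ⊆ a
  h_mem : ∀ ξ ∈ a, ξ ∈ h ξ
  h_le : ∀ ξ ∈ a, ∀ η ∈ h ξ, η ≤ ξ
  i_symm : ∀ ξ η, i ξ η = i η ξ
  i_sub_f : ∀ ξ ∈ a, ∀ η ∈ a, ξ ≠ η → ∀ ν ∈ i ξ η, ν ∈ f ξ η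
  i_sub_a : ∀ ξ ∈ a, ∀ η ∈ a, ξ ≠ η → i ξ η ⊆ a
  star_cond : ∀ ξ ∈ a, ∀ η ∈ a, ξ ≠ η → ostar (h ξ) (h η) ⊆ (i ξ η).biUnion h

/-- The order on `P_f`: `p ≤ q` iff `a^p ⊇ a^q`, `h^p(ξ) ∩ a^q = h^q(ξ)` for
`ξ ∈ a^q`, and `i^p` extends `i^q`. -/
def PfLe {f : Ordinal → Ordinal → Set Ordinal} (p q : PfCond f) : Prop :=
  q.a ⊆ p.a ∧ (∀ ξ ∈ q.a, p.h ξ ∩ q.a = q.h ξ) ∧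
    ∀ ξ ∈ q.a, ∀ η ∈ q.a, ξ ≠ η → p.i ξ η = q.i ξ η

universe u

theorem max_notMem_of_disjoint {β : Type*} [LinearOrder β] {x y : Finset β} (hxy : Disjoint x y) :
    ¬ ∃ m ∈ y, x.max = (m : WithBot β) :=
  fun ⟨_, hm, hmax⟩ => Finset.disjoint_left.1 hxy (Finset.mem_of_max hmax) hm

theorem ostar_eq_empty_of_disjoint {x y : Finset Ordinal.{u}} (hxy : Disjoint x y) :
    ostar x y = ∅ := by
  rw [ostar, if_neg (max_notMem_of_disjoint hxy), if_neg (max_notMem_of_disjoint hxy.symm),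
    Finset.disjoint_iff_inter_eq_empty.1 hxy]

namespace PfCond

variable {f : Ordinal.{u} → Ordinal.{u} → Set Ordinal.{u}} (q : PfCond f) {α ξ η : Ordinal.{u}}

theorem h_inter_a (hξ : ξ ∈ q.a) : q.h ξ ∩ q.a = q.h ξ :=
  Finset.inter_eq_left.2 (q.h_sub ξ hξ)

theorem pfLe_refl : PfLe q q :=
  ⟨subset_rfl, fun _ => q.h_inter_a, fun _ _ _ _ _ => rfl⟩

theorem disjoint_singleton_h (hα : α ∉ q.a) (hξ : ξ ∈ q.a) : Disjoint {α} (q.h ξ) :=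
  Finset.disjoint_singleton_left.2 fun hαξ => hα (q.h_sub ξ hξ hαξ)

theorem biUnion_i_update_h (hα : α ∉ q.a) (s : Finset Ordinal.{u})
    (hξ : ξ ∈ q.a) (hη : η ∈ q.a) (hne : ξ ≠ η) :
    (q.i ξ η).biUnion (Function.update q.h α s) = (q.i ξ η).biUnion q.h :=
  Finset.biUnion_congr rfl fun _ hν =>
    Function.update_of_ne (ne_of_mem_of_not_mem (q.i_sub_a ξ hξ η hη hne hν) hα) s q.h

/-- The one-point extension of a condition by a new ordinal `α`, with `h α = {α}` and
`i {α, ξ} = ∅`. The empty values are admissible because `{α}` is disjoint from every old `h ξ`,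
so that `h α * h ξ = ∅`. -/
def adjoin (α : Ordinal.{u}) (hα : α < omega2) (hαq : α ∉ q.a) : PfCond f where
  a := insert α q.a
  h := Function.update q.h α {α}
  i ξ η := if ξ = α ∨ η = α then ∅ else q.i ξ η
  a_lt := Finset.forall_mem_insert _ _ _ |>.2 ⟨hα, q.a_lt⟩
  h_sub ξ hξ := by
    have := q.h_sub ξ
    grind
  h_mem ξ hξ := by
    have := q.h_mem ξ
    grind
  h_le ξ hξ := by
    have := q.h_le ξ
    grind
  i_symm ξ η := by simp only [or_comm, q.i_symm]
  i_sub_f ξ hξ η hη hne := by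
    have := q.i_sub_f ξ
    grind
  i_sub_a ξ hξ η hη hne := by
    have := q.i_sub_a ξ
    grind
  star_cond ξ hξ η hη hne := by
    rcases Finset.mem_insert.1 hξ with rfl | hξq
    · have hηq := Finset.mem_of_mem_insert_of_ne hη hne.symm
      have star_eq_empty : ostar {ξ} (q.h η) = ∅ :=
        ostar_eq_empty_of_disjoint (q.disjoint_singleton_h hαq hηq)
      simp [hne.symm, star_eq_empty]
    rcases Finset.mem_insert.1 hη with rfl | hηq
    · have star_eq_empty : ostar (q.h ξ) {η} = ∅ :=
        ostar_eq_empty_of_disjoint (q.disjoint_singleton_h hαq hξq).symm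
      simp [hne, star_eq_empty]
    have hξα : ξ ≠ α := ne_of_mem_of_not_mem hξq hαq
    have hηα : η ≠ α := ne_of_mem_of_not_mem hηq hαq
    rw [if_neg (not_or.2 ⟨hξα, hηα⟩), Function.update_of_ne hξα, Function.update_of_ne hηα,
      q.biUnion_i_update_h hαq {α} hξq hηq hne]
    exact q.star_cond ξ hξq η hηq hne

theorem mem_adjoin_a (hα : α < omega2) (hαq : α ∉ q.a) : α ∈ (q.adjoin α hα hαq).a :=
  Finset.mem_insert_self _ _

theorem adjoin_h_of_mem (hα : α < omega2) (hαq : α ∉ q.a) (hξ : ξ ∈ q.a) :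
    (q.adjoin α hα hαq).h ξ = q.h ξ :=
  Function.update_of_ne (ne_of_mem_of_not_mem hξ hαq) _ _

theorem adjoin_i_of_mem (hα : α < omega2) (hαq : α ∉ q.a) (hξ : ξ ∈ q.a) (hη : η ∈ q.a) :
    (q.adjoin α hα hαq).i ξ η = q.i ξ η :=
  if_neg (not_or.2 ⟨ne_of_mem_of_not_mem hξ hαq, ne_of_mem_of_not_mem hη hαq⟩)

theorem adjoin_pfLe (hα : α < omega2) (hαq : α ∉ q.a) : PfLe (q.adjoin α hα hαq) q := by
  refine ⟨Finset.subset_insert _ _, fun ξ hξ => ?_, fun ξ hξ η hη _ => ?_⟩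
  · rw [q.adjoin_h_of_mem hα hαq hξ, q.h_inter_a hξ]
  · exact q.adjoin_i_of_mem hα hαq hξ hη

end PfCond

theorem stmt10_general (f : Ordinal.{u} → Ordinal.{u} → Set Ordinal.{u})
    (α : Ordinal.{u}) (hα : α < omega2) (q : PfCond f) :
    ∃ p : PfCond f, PfLe p q ∧ α ∈ p.a := by
  by_cases hαq : α ∈ q.a
  · exact ⟨q, q.pfLe_refl, hαq⟩
  · exact ⟨q.adjoin α hα hαq, q.adjoin_pfLe hα hαq, q.mem_adjoin_a hα hαq⟩

theorem stmt10
    (f : Ordinal → Ordinal → Set Ordinal)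
    (hsymm : ∀ α β, f α β = f β α)
    (hlt : ∀ α β γ, γ ∈ f α β → γ < α ∧ γ < β)
    (hcount : ∀ α β, (f α β).Countable)
    (α : Ordinal) (hα : α < omega2) (q : PfCond f) :
    ∃ p : PfCond f, PfLe p q ∧ α ∈ p.a :=
  stmt10_general f α hα q
end
end
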